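/- arXiv:2004.12990 — 7 statements merged into one kernel-verified Lean document; each statement's English description precedes it below -/
import Mathlib

section
/- Let (A,w) be a balanced, possibly partial solution (A⊆C, |A|≤k). Then for each integer r with 1≤r≤|A|, the vector w simultaneously maximizes min_{A'⊆A, |A'|=r} ∑_{c∈A'} supp_{w'}(c) over all feasible weight vectors w'∈ℝ^E. -/
/-!
Write `x c = supp_w(c)` and `y c = supp_{w'}(c)`. Balancedness has two local consequences.

* A voter approving some member of `A` spends her whole strength on `A`; otherwise the sum of
  supports over `A` could be increased (`full_weight`).
* If `w n c > 0` and `n` also approves `c'`, with `c, c' ∈ A`, then `x c ≤ x c'`; otherwise moving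
  a little weight from `c` to `c'` lowers the sum of squares (`supp_le_of_pos`).

Hence, if `L ⊆ A` is a lower set for `x`, every voter approving a member of `L` spends everything
on `L`, so that `∑_L y ≤ ∑_L x` (`sum_supp_le_of_lower`).

Let `B` be an `r`-subset of `A` minimizing `∑_B x`, and `t = max_B x`. Minimality gives
`L ⊆ B ⊆ L ∪ M`, where `L = {x < t}` and `M = {x = t}`. An averaging argument
(`exists_subset_card_avg`) provides `S ⊆ M` with `|S| = r - |L|` whose `y`-average is at most that
of `M`. Then `∑_{L ∪ S} y` is at most a convex combination of `∑_L y` and `∑_{L ∪ M} y`; as `L` and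
`L ∪ M` are lower sets, it is at most the same combination for `x`, which equals `∑_B x`.
-/


open Finset

section Defs

variable {V Cand : Type*} [Fintype V] [Fintype Cand] [DecidableEq V] [DecidableEq Cand]

/-- The set `C_n` of candidates approved by voter `n`. -/
def approves (edge : V → Cand → Prop) [∀ n c, Decidable (edge n c)] (n : V) : Finset Cand :=
  Finset.univ.filter (fun c => edge n c)

/-- The set `N_c` of voters approving candidate `c`. -/
def approvers (edge : V → Cand → Prop) [∀ n c, Decidable (edge n c)] (c : Cand) : Finset V :=
  Finset.univ.filter (fun n => edge n c)

/-- Feasibility of an edge-weight vector: nonnegative, supported on the edges of the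
approval graph, and the total weight assigned by each voter is at most her vote strength. -/
def Feasible (edge : V → Cand → Prop) [∀ n c, Decidable (edge n c)]
    (s : V → ℝ) (w : V → Cand → ℝ) : Prop :=
  (∀ n c, 0 ≤ w n c) ∧ (∀ n c, ¬ edge n c → w n c = 0) ∧
    ∀ n, ∑ c ∈ approves edge n, w n c ≤ s n

/-- The support `supp_w(c)` of a candidate. -/
noncomputable def supp (edge : V → Cand → Prop) [∀ n c, Decidable (edge n c)]
    (w : V → Cand → ℝ) (c : Cand) : ℝ :=
  ∑ n ∈ approvers edge c, w n c

/-- `supp_w(A) = min_{c ∈ A} supp_w(c)`, valued in `EReal` with the convention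
`supp_w(∅) = ∞`. -/
noncomputable def suppMin (edge : V → Cand → Prop) [∀ n c, Decidable (edge n c)]
    (w : V → Cand → ℝ) (A : Finset Cand) : EReal :=
  A.inf (fun c => (supp edge w c : EReal))

/-- `w` is balanced for `A`: among feasible vectors it maximizes the sum of member supports
and, subject to that, minimizes the sum of squared member supports. -/
def BalancedWeight (edge : V → Cand → Prop) [∀ n c, Decidable (edge n c)] (s : V → ℝ)
    (A : Finset Cand) (w : V → Cand → ℝ) : Prop :=
  Feasible edge s w ∧
  (∀ w', Feasible edge s w' → ∑ c ∈ A, supp edge w' c ≤ ∑ c ∈ A, supp edge w c) ∧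
  (∀ w', Feasible edge s w' → ∑ c ∈ A, supp edge w' c = ∑ c ∈ A, supp edge w c →
    ∑ c ∈ A, (supp edge w c) ^ 2 ≤ ∑ c ∈ A, (supp edge w' c) ^ 2)

/-- The slack of voter `n` at threshold `t`, relative to the solution `(A, w)`. -/
noncomputable def slack (edge : V → Cand → Prop) [∀ n c, Decidable (edge n c)] (s : V → ℝ)
    (A : Finset Cand) (w : V → Cand → ℝ) (n : V) (t : ℝ) : ℝ :=
  s n - ∑ c ∈ A ∩ approves edge n, w n c * min 1 (t / supp edge w c)

/-- The pre-score of an unelected candidate `c'` at threshold `t`. -/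
noncomputable def prescore (edge : V → Cand → Prop) [∀ n c, Decidable (edge n c)] (s : V → ℝ)
    (A : Finset Cand) (w : V → Cand → ℝ) (c' : Cand) (t : ℝ) : ℝ :=
  ∑ n ∈ approvers edge c', slack edge s A w n t

/-- `score(c') = max { t ≥ 0 : prescore(c', t) ≥ t }`. -/
noncomputable def score (edge : V → Cand → Prop) [∀ n c, Decidable (edge n c)] (s : V → ℝ)
    (A : Finset Cand) (w : V → Cand → ℝ) (c' : Cand) : ℝ :=
  sSup {t : ℝ | 0 ≤ t ∧ t ≤ prescore edge s A w c' t}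

/-- Proportional justified representation for a committee of target size `k`. -/
def PJR (edge : V → Cand → Prop) [∀ n c, Decidable (edge n c)] (s : V → ℝ)
    (k : ℕ) (A : Finset Cand) : Prop :=
  ¬ ∃ (N' : Finset V) (r : ℕ), 0 < r ∧ r ≤ k ∧
      (r : ℝ) / k * ∑ n, s n ≤ ∑ n ∈ N', s n ∧
      r ≤ (N'.inf (approves edge)).card ∧
      (A ∩ N'.sup (approves edge)).card < r

/-- Parametric proportional justified representation (`t`-PJR). -/
def tPJR (edge : V → Cand → Prop) [∀ n c, Decidable (edge n c)] (s : V → ℝ)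
    (A : Finset Cand) (t : ℝ) : Prop :=
  ¬ ∃ (N' : Finset V) (r : ℕ), 0 < r ∧ r ≤ A.card ∧
      (r : ℝ) * t ≤ ∑ n ∈ N', s n ∧
      r ≤ (N'.inf (approves edge)).card ∧
      (A ∩ N'.sup (approves edge)).card < r

end Defs

section Helpers

set_option linter.unusedSectionVars false

variable {V Cand : Type*} [Fintype V] [Fintype Cand] [DecidableEq V] [DecidableEq Cand]
  {edge : V → Cand → Prop} [∀ n c, Decidable (edge n c)] {s : V → ℝ} {A : Finset Cand}
  {w w' : V → Cand → ℝ}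

lemma Feasible.supp_eq (hw : Feasible edge s w) (c : Cand) : supp edge w c = ∑ n, w n c := by
  unfold supp approvers
  rw [Finset.sum_filter]
  refine Finset.sum_congr rfl fun n _ => ?_
  split_ifs with h
  · rfl
  · exact (hw.2.1 n c h).symm

lemma sum_approves_eq {n : V} {row : Cand → ℝ} (h : ∀ c, ¬ edge n c → row c = 0) :
    ∑ c ∈ approves edge n, row c = ∑ c, row c := by
  unfold approves
  rw [Finset.sum_filter]
  refine Finset.sum_congr rfl fun c _ => ?_
  split_ifs with hc
  · rfl
  · exact (h c hc).symm

lemma Feasible.sum_le (hw : Feasible edge s w) (n : V) (L : Finset Cand) :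
    ∑ c ∈ L, w n c ≤ s n := by
  refine le_trans ?_ (hw.2.2 n)
  rw [sum_approves_eq (hw.2.1 n)]
  exact Finset.sum_le_sum_of_subset_of_nonneg (Finset.subset_univ _) fun c _ _ => hw.1 n c

lemma Feasible.update (hw : Feasible edge s w) {n : V} {row : Cand → ℝ} (h0 : ∀ c, 0 ≤ row c)
    (he : ∀ c, ¬ edge n c → row c = 0) (hsum : ∑ c, row c ≤ s n) :
    Feasible edge s (Function.update w n row) := by
  refine ⟨fun m c => ?_, fun m c hc => ?_, fun m => ?_⟩ <;> by_cases hm : m = n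
  · subst hm; simpa using h0 c
  · simpa [hm] using hw.1 m c
  · subst hm; simpa using he c hc
  · simpa [hm] using hw.2.1 m c hc
  · subst hm
    simp only [Function.update_self]
    rw [sum_approves_eq he]
    exact hsum
  · simpa [hm] using hw.2.2 m

lemma Feasible.supp_update (hw : Feasible edge s w) {n : V} {row : Cand → ℝ}
    (hw' : Feasible edge s (Function.update w n row)) (c : Cand) :
    supp edge (Function.update w n row) c = supp edge w c + (row c - w n c) := by
  rw [hw.supp_eq, hw'.supp_eq, ← Finset.add_sum_erase _ _ (Finset.mem_univ n),
    ← Finset.add_sum_erase (a := n) _ (fun m => w m c) (Finset.mem_univ n)]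
  have : ∑ m ∈ Finset.univ.erase n, Function.update w n row m c
      = ∑ m ∈ Finset.univ.erase n, w m c :=
    Finset.sum_congr rfl fun m hm => by simp [(Finset.mem_erase.1 hm).1]
  rw [this]
  simp only [Function.update_self]
  ring

/-- In a balanced solution, a voter approving a member of `A` spends all her strength on `A`. -/
lemma full_weight (hbal : BalancedWeight edge s A w) {n : V} {c' : Cand} (hc' : c' ∈ A)
    (hn : edge n c') : ∑ c ∈ A, w n c = s n := by
  obtain ⟨hw, hmax, -⟩ := hbal
  refine le_antisymm (hw.sum_le n A) ?_
  by_contra! hlt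
  set δ := s n - ∑ c ∈ A, w n c with hδ
  have hδ0 : 0 < δ := by linarith
  -- Withdraw the weight spent outside `A` and give all unspent strength to `c'`.
  let row : Cand → ℝ := fun d => (if d ∈ A then w n d else 0) + (if d = c' then δ else 0)
  have hfeas : Feasible edge s (Function.update w n row) := by
    refine hw.update (fun c => ?_) (fun c hc => ?_) ?_
    · have := hw.1 n c
      simp only [row]; split_ifs <;> linarith
    · have h1 : c ≠ c' := by rintro rfl; exact hc hn
      simp [row, h1, hw.2.1 n c hc]
    · simp only [row, Finset.sum_add_distrib, Finset.sum_ite_mem, Finset.univ_inter,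
        Finset.sum_ite_eq', Finset.mem_univ, if_true]
      linarith
  have h := hmax _ hfeas
  have hsum : ∑ c ∈ A, (row c - w n c) = δ := by
    rw [← Finset.sum_ite_eq_of_mem' A c' (fun _ => δ) hc']
    refine Finset.sum_congr rfl fun c hc => ?_
    simp [row, hc]
  rw [Finset.sum_congr rfl fun c _ => hw.supp_update hfeas c, Finset.sum_add_distrib, hsum] at h
  linarith

/-- In a balanced solution, a voter only supports members of `A` whose support is minimal among
the members of `A` she approves. -/
lemma supp_le_of_pos (hbal : BalancedWeight edge s A w) {n : V} {c c' : Cand} (hc : c ∈ A)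
    (hc' : c' ∈ A) (hn : edge n c') (hpos : 0 < w n c) : supp edge w c ≤ supp edge w c' := by
  obtain ⟨hw, -, hmin⟩ := hbal
  by_contra! hlt
  have hne : c ≠ c' := by rintro rfl; exact lt_irrefl _ hlt
  have hedge : edge n c := by
    by_contra h
    exact hpos.ne' (hw.2.1 n c h)
  -- Any amount below the gap between the two supports lowers the sum of squares.
  obtain ⟨ε, hε0, hεw, hεgap⟩ : ∃ ε : ℝ, 0 < ε ∧ ε ≤ w n c ∧
      ε < supp edge w c - supp edge w c' := by
    refine ⟨min (w n c) ((supp edge w c - supp edge w c') / 2), lt_min hpos (by linarith),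
      min_le_left _ _, lt_of_le_of_lt (min_le_right _ _) (by linarith)⟩
  let e : Cand → ℝ := fun d => (if d = c' then ε else 0) - (if d = c then ε else 0)
  let row : Cand → ℝ := fun d => w n d + e d
  have hfeas : Feasible edge s (Function.update w n row) := by
    refine hw.update (fun d => ?_) (fun d hd => ?_) ?_
    · have := hw.1 n d
      by_cases h : d = c
      · subst h; simp [row, e, hne, hεw]
      · simp only [row, e, h, if_false]; split_ifs <;> linarith
    · have h1 : d ≠ c' := by rintro rfl; exact hd hn
      have h2 : d ≠ c := by rintro rfl; exact hd hedge
      simp [row, e, h1, h2, hw.2.1 n d hd]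
    · have := hw.sum_le n Finset.univ
      simpa [row, e, Finset.sum_add_distrib, Finset.sum_sub_distrib] using this
  have hsupp : ∀ d, supp edge (Function.update w n row) d = supp edge w d + e d := fun d => by
    rw [hw.supp_update hfeas]; simp [row]
  have h := hmin _ hfeas (by
    simp [hsupp, e, Finset.sum_add_distrib, Finset.sum_sub_distrib, hc, hc'])
  have hsq : ∀ d, supp edge (Function.update w n row) d ^ 2 = supp edge w d ^ 2 +
      ((if d = c' then 2 * ε * supp edge w c' + ε ^ 2 else 0) +
        (if d = c then - (2 * ε * supp edge w c) + ε ^ 2 else 0)) := fun d => by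
    rw [hsupp]
    by_cases h1 : d = c
    · subst h1; simp [e, hne]; ring
    · by_cases h2 : d = c'
      · subst h2; simp [e, h1]; ring
      · simp [e, h1, h2]
  simp only [hsq, Finset.sum_add_distrib, Finset.sum_ite_eq', hc, hc', if_true] at h
  nlinarith [mul_pos hε0 (sub_pos.2 hεgap)]

/-- On a lower set of the balanced supports, the balanced total support is the largest possible. -/
lemma sum_supp_le_of_lower (hbal : BalancedWeight edge s A w) (hw' : Feasible edge s w')
    {L : Finset Cand} (hLA : L ⊆ A)
    (hL : ∀ c' ∈ L, ∀ c ∈ A, supp edge w c ≤ supp edge w c' → c ∈ L) :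
    ∑ c ∈ L, supp edge w' c ≤ ∑ c ∈ L, supp edge w c := by
  have hw := hbal.1
  simp only [hw.supp_eq, hw'.supp_eq] at hL ⊢
  rw [Finset.sum_comm, Finset.sum_comm (s := L)]
  refine Finset.sum_le_sum fun n _ => ?_
  by_cases h : ∃ c' ∈ L, edge n c'
  · obtain ⟨c', hc', hn⟩ := h
    refine (hw'.sum_le n L).trans ?_
    rw [← full_weight hbal (hLA hc') hn]
    refine (Finset.sum_subset hLA fun c hc hcL => ?_).ge
    by_contra hne
    refine hcL (hL c' hc' c hc ?_)
    have := supp_le_of_pos hbal hc (hLA hc') hn (lt_of_le_of_ne (hw.1 n c) (Ne.symm hne))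
    rwa [hw.supp_eq, hw.supp_eq] at this
  · push Not at h
    rw [Finset.sum_eq_zero fun c hc => hw'.2.1 n c (h c hc)]
    exact Finset.sum_nonneg fun c _ => hw.1 n c

/-- Some `m`-subset of `M` has `y`-average at most that of `M`. -/
lemma exists_subset_card_avg {ι : Type*} [DecidableEq ι] (M : Finset ι) (y : ι → ℝ) {m : ℕ}
    (hm : m ≤ M.card) : ∃ S ⊆ M, S.card = m ∧ (M.card : ℝ) * ∑ c ∈ S, y c ≤ m * ∑ c ∈ M, y c := by
  -- Start from `M` and repeatedly delete an element with the largest value.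
  induction hm using Nat.decreasingInduction with
  | self => exact ⟨M, subset_rfl, rfl, le_rfl⟩
  | of_succ m _ ih =>
    obtain ⟨S, hSM, hcard, hS⟩ := ih
    obtain ⟨a, ha, hmax⟩ := S.exists_max_image y (Finset.card_pos.1 (by omega))
    refine ⟨S.erase a, (Finset.erase_subset _ _).trans hSM, by
      rw [Finset.card_erase_of_mem ha]; omega, ?_⟩
    have h1 := Finset.sum_le_card_nsmul S y (y a) hmax
    have h2 := Finset.add_sum_erase S y ha
    rw [hcard, nsmul_eq_mul] at h1
    push_cast at h1 hS
    have h3 : (m + 1 : ℝ) * ∑ c ∈ S.erase a, y c ≤ m * ∑ c ∈ S, y c := by nlinarith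
    have h4 := mul_le_mul_of_nonneg_left h3 (Nat.cast_nonneg (α := ℝ) M.card)
    have h5 := mul_le_mul_of_nonneg_left hS (Nat.cast_nonneg (α := ℝ) m)
    have hm0 : (0 : ℝ) < m + 1 := by positivity
    refine le_of_mul_le_mul_left ?_ hm0
    nlinarith

end Helpers

theorem maximin_balanced_maximizes_all_partial_sums
    {V Cand : Type*} [Fintype V] [Fintype Cand] [DecidableEq V] [DecidableEq Cand]
    (edge : V → Cand → Prop) [∀ n c, Decidable (edge n c)]
    (s : V → ℝ) (hs : ∀ n, 0 ≤ s n) (k : ℕ)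
    (A : Finset Cand) (w : V → Cand → ℝ)
    (hbal : BalancedWeight edge s A w) (hAk : A.card ≤ k)
    (r : ℕ) (hr1 : 1 ≤ r) (hr2 : r ≤ A.card)
    (w' : V → Cand → ℝ) (hw' : Feasible edge s w') :
    (A.powersetCard r).inf' (by rw [Finset.powersetCard_nonempty]; exact hr2)
        (fun B => ∑ c ∈ B, supp edge w' c) ≤
      (A.powersetCard r).inf' (by rw [Finset.powersetCard_nonempty]; exact hr2)
        (fun B => ∑ c ∈ B, supp edge w c) := by
  obtain ⟨B, hB, hBmin⟩ := Finset.exists_mem_eq_inf'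
    (Finset.powersetCard_nonempty.2 hr2) (fun B => ∑ c ∈ B, supp edge w c)
  rw [hBmin]
  have hle : ∀ B' ⊆ A, B'.card = r → ∑ c ∈ B, supp edge w c ≤ ∑ c ∈ B', supp edge w c := by
    intro B' h1 h2
    rw [← hBmin]
    exact Finset.inf'_le _ (Finset.mem_powersetCard.2 ⟨h1, h2⟩)
  obtain ⟨hBA, hBr⟩ := Finset.mem_powersetCard.1 hB
  set x := supp edge w with hx
  set y := supp edge w' with hy
  obtain ⟨b, hb, hbmax⟩ := B.exists_max_image x (Finset.card_pos.1 (by omega))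
  set L := A.filter (fun c => x c < x b) with hLdef
  set M := A.filter (fun c => x c = x b) with hMdef
  have hdisj : Disjoint L M := Finset.disjoint_filter.2 fun c _ h1 h2 => h1.ne h2
  have hLB : L ⊆ B := by
    intro c hc
    by_contra hcB
    obtain ⟨hcA, hlt⟩ := Finset.mem_filter.1 hc
    -- Exchanging `b` for `c` would give an `r`-subset with a smaller sum.
    have hce : c ∉ B.erase b := fun h => hcB (Finset.mem_of_mem_erase h)
    have h := hle (insert c (B.erase b))
      (Finset.insert_subset hcA ((Finset.erase_subset _ _).trans hBA))
      (by rw [Finset.card_insert_of_notMem hce, Finset.card_erase_of_mem hb]; omega)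
    rw [Finset.sum_insert hce, ← Finset.add_sum_erase B x hb] at h
    linarith
  have hBM : B \ L ⊆ M := by
    intro c hc
    obtain ⟨hcB, hcL⟩ := Finset.mem_sdiff.1 hc
    refine Finset.mem_filter.2 ⟨hBA hcB, le_antisymm (hbmax c hcB) ?_⟩
    by_contra! h
    exact hcL (Finset.mem_filter.2 ⟨hBA hcB, h⟩)
  have hbM : b ∈ M := Finset.mem_filter.2 ⟨hBA hb, rfl⟩
  have hcard : (B \ L).card + L.card = r := by
    rw [Finset.card_sdiff_add_card_eq_card hLB, hBr]
  have hmM := Finset.card_le_card hBM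
  obtain ⟨S, hSM, hSm, hS⟩ := exists_subset_card_avg M y hmM
  have hdS : Disjoint L S := hdisj.mono_right hSM
  have hmem : L ∪ S ∈ A.powersetCard r := by
    refine Finset.mem_powersetCard.2 ⟨Finset.union_subset (Finset.filter_subset _ _)
      (hSM.trans (Finset.filter_subset _ _)), ?_⟩
    rw [Finset.card_union_of_disjoint hdS]
    omega
  refine (Finset.inf'_le _ hmem).trans ?_
  have h1 : ∑ c ∈ L, y c ≤ ∑ c ∈ L, x c := by
    refine sum_supp_le_of_lower hbal hw' (Finset.filter_subset _ _) fun c' hc' c hc h => ?_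
    exact Finset.mem_filter.2 ⟨hc, h.trans_lt (Finset.mem_filter.1 hc').2⟩
  have h2 : ∑ c ∈ L ∪ M, y c ≤ ∑ c ∈ L ∪ M, x c := by
    have hLM : L ∪ M = A.filter (fun c => x c ≤ x b) := by
      ext c
      simp only [L, M, Finset.mem_union, Finset.mem_filter, le_iff_lt_or_eq]
      tauto
    rw [hLM]
    refine sum_supp_le_of_lower hbal hw' (Finset.filter_subset _ _) fun c' hc' c hc h => ?_
    exact Finset.mem_filter.2 ⟨hc, h.trans (Finset.mem_filter.1 hc').2⟩
  have h3 : ∑ c ∈ M, x c = M.card * x b := by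
    rw [Finset.sum_congr rfl fun c hc => (Finset.mem_filter.1 hc).2, Finset.sum_const,
      nsmul_eq_mul]
  have h4 : ∑ c ∈ B \ L, x c = (B \ L).card * x b := by
    rw [Finset.sum_congr rfl fun c hc => (Finset.mem_filter.1 (hBM hc)).2, Finset.sum_const,
      nsmul_eq_mul]
  rw [Finset.sum_union hdisj, Finset.sum_union hdisj, h3] at h2
  rw [← Finset.sum_sdiff hLB, h4, Finset.sum_union hdS]
  have hM0 : (0 : ℝ) < M.card := by exact_mod_cast Finset.card_pos.2 ⟨b, hbM⟩
  -- With `m = |B \ L|`, weight the inequalities for `L` and `L ∪ M` by `|M| - m` and `m`.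
  have h5 := mul_le_mul_of_nonneg_left h1 (sub_nonneg.2 (Nat.cast_le (α := ℝ).2 hmM))
  have h6 := mul_le_mul_of_nonneg_left h2 (Nat.cast_nonneg (α := ℝ) (B \ L).card)
  refine le_of_mul_le_mul_left ?_ hM0
  nlinarith
end

section
/- Let A⊆C be a committee and let w,w'∈ℝ^E be two feasible weight vectors each satisfying: (i) ∑_{c∈A∩C_n} w_{nc}=s_n for every voter n∈∪_{c∈A} N_c, and (ii) for every voter n∈∪_{c∈A} N_c and every c∈A∩C_n with positive weight on edge nc, the support of c equals min_{c'∈A∩C_n} of the supports. Then w and w' induce the same list of member supports, i.e. supp_w(c)=supp_{w'}(c) for every c∈A; consequently any feasible weight vector satisfying (i) and (ii) is balanced for A. -/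
/-!
Conditions (i) and (ii) are the optimality conditions of a convex program, and the proof turns
them into a variational inequality. Write `x c = supp w c`, and let `u` be a feasible vector in
which every voter gives the members of `A` the same total weight as in `w`. By (ii) each voter
places all of her `w`-weight on approved members of least support `x`, so
`∑ c, w n c * x c ≤ ∑ c, u n c * x c` for every voter `n`, the sums running over her approved
members. Adding this over the voters gives `∑ x c ^ 2 ≤ ∑ x c * y c` with `y c = supp u c`
(`sum_supp_sq_le`).

Uniqueness: applied to the pairs `(w, w')` and `(w', w)`, the inequality yields
`∑ (x c - y c) ^ 2 ≤ 0`. Balance: by (i) the total member support of `w` is the largest possible,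
and a feasible `u` attaining it must agree with `w` on the total each voter gives to `A`, so that
`∑ x c ^ 2 ≤ ∑ x c * y c ≤ (∑ x c ^ 2 + ∑ y c ^ 2) / 2`.
-/

open Finset

/-- Double counting: a weighted sum of member supports, regrouped by voter. -/
lemma sum_mul_supp {V Cand : Type*} [Fintype V] [Fintype Cand] [DecidableEq Cand]
    (edge : V → Cand → Prop) [∀ n c, Decidable (edge n c)]
    (A : Finset Cand) (u : V → Cand → ℝ) (f : Cand → ℝ) :
    ∑ c ∈ A, f c * supp edge u c = ∑ n, ∑ c ∈ A ∩ approves edge n, u n c * f c := by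
  simp only [supp, Finset.mul_sum]
  rw [Finset.sum_comm' (t' := Finset.univ) (s' := fun n => A ∩ approves edge n)]
  · exact Finset.sum_congr rfl fun n _ => Finset.sum_congr rfl fun c _ => mul_comm _ _
  · intro c n
    simp [approves, approvers]

/-- Double counting: the total member support is the total weight the voters give to `A`. -/
lemma sum_supp {V Cand : Type*} [Fintype V] [Fintype Cand] [DecidableEq Cand]
    (edge : V → Cand → Prop) [∀ n c, Decidable (edge n c)]
    (A : Finset Cand) (u : V → Cand → ℝ) :
    ∑ c ∈ A, supp edge u c = ∑ n, ∑ c ∈ A ∩ approves edge n, u n c := by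
  simpa using sum_mul_supp edge A u (fun _ => 1)

/-- The variational inequality: if `w` satisfies (ii), and `u` gives the same total weight to `A`
voter by voter, then `⟨x, x⟩ ≤ ⟨x, y⟩` for the vectors `x`, `y` of member supports of `w`, `u`. -/
lemma sum_supp_sq_le {V Cand : Type*} [Fintype V] [Fintype Cand] [DecidableEq Cand]
    (edge : V → Cand → Prop) [∀ n c, Decidable (edge n c)]
    (A : Finset Cand) (w u : V → Cand → ℝ)
    (hw : ∀ n c, 0 ≤ w n c) (hu : ∀ n c, 0 ≤ u n c)
    (hii : ∀ (n : V) (c : Cand) (hc : c ∈ A ∩ approves edge n), 0 < w n c →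
      supp edge w c = (A ∩ approves edge n).inf' ⟨c, hc⟩ (supp edge w))
    (heq : ∀ n, ∑ c ∈ A ∩ approves edge n, u n c = ∑ c ∈ A ∩ approves edge n, w n c) :
    ∑ c ∈ A, supp edge w c ^ 2 ≤ ∑ c ∈ A, supp edge w c * supp edge u c := by
  simp only [pow_two]
  rw [sum_mul_supp, sum_mul_supp]
  refine Finset.sum_le_sum fun n _ => ?_
  rcases (A ∩ approves edge n).eq_empty_or_nonempty with h | h
  · simp [h]
  calc ∑ c ∈ A ∩ approves edge n, w n c * supp edge w c
      = ∑ c ∈ A ∩ approves edge n, w n c * (A ∩ approves edge n).inf' h (supp edge w) := by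
        refine Finset.sum_congr rfl fun c hc => ?_
        rcases (hw n c).eq_or_lt with h0 | h0
        · simp [← h0]
        · rw [← hii n c hc h0]
    _ = ∑ c ∈ A ∩ approves edge n, u n c * (A ∩ approves edge n).inf' h (supp edge w) := by
        rw [← Finset.sum_mul, ← Finset.sum_mul, heq]
    _ ≤ ∑ c ∈ A ∩ approves edge n, u n c * supp edge w c :=
        Finset.sum_le_sum fun c hc =>
          mul_le_mul_of_nonneg_left (Finset.inf'_le _ hc) (hu n c)

/-- By (i), no feasible vector makes a voter give more weight to `A` than `w` does. -/
lemma sum_inter_le {V Cand : Type*} [Fintype V] [Fintype Cand] [DecidableEq Cand]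
    (edge : V → Cand → Prop) [∀ n c, Decidable (edge n c)] (s : V → ℝ)
    (A : Finset Cand) (w u : V → Cand → ℝ) (hu : Feasible edge s u)
    (hi : ∀ n : V, (∃ c ∈ A, edge n c) → ∑ c ∈ A ∩ approves edge n, w n c = s n) (n : V) :
    ∑ c ∈ A ∩ approves edge n, u n c ≤ ∑ c ∈ A ∩ approves edge n, w n c := by
  rcases (A ∩ approves edge n).eq_empty_or_nonempty with h | ⟨c, hc⟩
  · simp [h]
  · rw [hi n ⟨c, by simpa [approves] using hc⟩]
    exact (Finset.sum_le_sum_of_subset_of_nonneg Finset.inter_subset_right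
      fun c _ _ => hu.1 n c).trans (hu.2.2 n)


theorem conditions_characterize_balanced
    {V Cand : Type*} [Fintype V] [Fintype Cand] [DecidableEq V] [DecidableEq Cand]
    (edge : V → Cand → Prop) [∀ n c, Decidable (edge n c)]
    (s : V → ℝ) (hs : ∀ n, 0 ≤ s n)
    (A : Finset Cand) (w w' : V → Cand → ℝ)
    (hw : Feasible edge s w) (hw' : Feasible edge s w')
    (hi : ∀ n : V, (∃ c ∈ A, edge n c) → ∑ c ∈ A ∩ approves edge n, w n c = s n)
    (hi' : ∀ n : V, (∃ c ∈ A, edge n c) → ∑ c ∈ A ∩ approves edge n, w' n c = s n)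
    (hii : ∀ (n : V) (c : Cand) (hc : c ∈ A ∩ approves edge n), 0 < w n c →
      supp edge w c = (A ∩ approves edge n).inf' ⟨c, hc⟩ (supp edge w))
    (hii' : ∀ (n : V) (c : Cand) (hc : c ∈ A ∩ approves edge n), 0 < w' n c →
      supp edge w' c = (A ∩ approves edge n).inf' ⟨c, hc⟩ (supp edge w')) :
    (∀ c ∈ A, supp edge w c = supp edge w' c) ∧ BalancedWeight edge s A w := by
  have hle := fun u hu => sum_inter_le edge s A w u hu hi
  have heq : ∀ n, ∑ c ∈ A ∩ approves edge n, w' n c = ∑ c ∈ A ∩ approves edge n, w n c :=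
    fun n => le_antisymm (hle w' hw' n) (sum_inter_le edge s A w' w hw hi' n)
  refine ⟨?_, hw, ?_, ?_⟩
  · have h1 := sum_supp_sq_le edge A w w' hw.1 hw'.1 hii heq
    have h2 := sum_supp_sq_le edge A w' w hw'.1 hw.1 hii' fun n => (heq n).symm
    have h3 : ∑ c ∈ A, (supp edge w c - supp edge w' c) ^ 2
        = (∑ c ∈ A, supp edge w c ^ 2 - ∑ c ∈ A, supp edge w c * supp edge w' c)
          + (∑ c ∈ A, supp edge w' c ^ 2 - ∑ c ∈ A, supp edge w' c * supp edge w c) := by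
      simp only [← Finset.sum_sub_distrib, ← Finset.sum_add_distrib]
      exact Finset.sum_congr rfl fun c _ => by ring
    have h4 : ∑ c ∈ A, (supp edge w c - supp edge w' c) ^ 2 = 0 :=
      le_antisymm (by linarith) (Finset.sum_nonneg fun c _ => sq_nonneg _)
    intro c hc
    have h5 := (Finset.sum_eq_zero_iff_of_nonneg fun c _ => sq_nonneg _).1 h4 c hc
    exact sub_eq_zero.1 (pow_eq_zero_iff two_ne_zero |>.1 h5)
  · intro u hu
    rw [sum_supp, sum_supp]
    exact Finset.sum_le_sum fun n _ => hle u hu n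
  · intro u hu hsum
    rw [sum_supp, sum_supp] at hsum
    -- Equal totals together with the voterwise inequalities force voterwise equality.
    have hequ := (Finset.sum_eq_sum_iff_of_le fun n _ => hle u hu n).1 hsum
    have h1 := sum_supp_sq_le edge A w u hw.1 hu.1 hii fun n => hequ n (Finset.mem_univ n)
    have h2 : 2 * ∑ c ∈ A, supp edge w c * supp edge u c
        ≤ ∑ c ∈ A, supp edge w c ^ 2 + ∑ c ∈ A, supp edge u c ^ 2 := by
      rw [Finset.mul_sum, ← Finset.sum_add_distrib]
      exact Finset.sum_le_sum fun c _ => by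
        linarith [two_mul_le_add_sq (supp edge w c) (supp edge u c)]
    linarith
end

section
/- If (A,w) is a balanced solution with A nonempty, then supp_w(A) = min over nonempty subsets A'⊆A of (1/|A'|)·∑_{n∈∪_{c∈A'} N_c} s_n. In particular, any balanced full solution (A,w) provides the same objective value to the maximin support problem and to the problem of maximizing min_{∅≠A'⊆A} (1/|A'|)·∑_{n∈∪_{c∈A'} N_c} s_n over full committees A. -/
/-! The minimum support `m` is at most every average, because the supports of the members of `B`
are paid for by the voters approving some member of `B`. For the converse, let `B` be the set of
members of `A` whose support is exactly `m`. If voter `n` approves `c₀ ∈ B`, then `n` spends all of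
`s n` on `A` (`balanced_row_sum`: otherwise the sum of supports could grow), and only on members of
support at most `supp c₀ = m` (`balanced_supp_le`: otherwise moving a little weight to `c₀` would
lower the sum of squares), hence only on members of `B`. So the inequality is tight for `B`.

Both exchange arguments modify a single row of `w`, which is what `replaceRow` does. -/

open Finset

section Rows

variable {V Cand : Type*} [Fintype V] [Fintype Cand] [DecidableEq V] [DecidableEq Cand]
  {edge : V → Cand → Prop} [∀ n c, Decidable (edge n c)] {s : V → ℝ} {A : Finset Cand}
  {w : V → Cand → ℝ}

/-- The weight vector `w` with the weights of voter `n` replaced by `r`. -/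
def replaceRow (w : V → Cand → ℝ) (n : V) (r : Cand → ℝ) : V → Cand → ℝ :=
  fun n' c => if n' = n then r c else w n' c

/-- Weights vanish off the edges, so the sum over approvers may be taken over all voters. -/
lemma supp_eq_sum (h : Feasible edge s w) (c : Cand) : supp edge w c = ∑ n, w n c := by
  unfold supp approvers
  refine Finset.sum_subset (Finset.subset_univ _) fun n _ hn => h.2.1 n c ?_
  simpa using hn

lemma sum_row_le (h : Feasible edge s w) (n : V) : ∑ c, w n c ≤ s n := by
  refine le_trans (le_of_eq ?_) (h.2.2 n)
  unfold approves
  refine (Finset.sum_subset (Finset.subset_univ _) fun c _ hc => h.2.1 n c ?_).symm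
  simpa using hc

lemma sum_row_finset_le (h : Feasible edge s w) (n : V) (B : Finset Cand) :
    ∑ c ∈ B, w n c ≤ s n :=
  (Finset.sum_le_sum_of_subset_of_nonneg (Finset.subset_univ B)
    fun c _ _ => h.1 n c).trans (sum_row_le h n)

lemma feasible_replaceRow (h : Feasible edge s w) (n : V) (r : Cand → ℝ)
    (h0 : ∀ c, 0 ≤ r c) (hr : ∀ c, ¬ edge n c → r c = 0) (hsum : ∑ c, r c ≤ s n) :
    Feasible edge s (replaceRow w n r) := by
  refine ⟨fun n' c => ?_, fun n' c hc => ?_, fun n' => ?_⟩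
  · unfold replaceRow
    split_ifs
    exacts [h0 c, h.1 n' c]
  · unfold replaceRow
    split_ifs with e
    · subst e; exact hr c hc
    · exact h.2.1 n' c hc
  · by_cases e : n' = n
    · subst e
      simp only [replaceRow, if_true]
      exact (Finset.sum_le_sum_of_subset_of_nonneg (Finset.subset_univ _)
        fun c _ _ => h0 c).trans hsum
    · simp only [replaceRow, if_neg e]
      exact h.2.2 n'

lemma supp_replaceRow (h : Feasible edge s w) (n : V) (r : Cand → ℝ)
    (h' : Feasible edge s (replaceRow w n r)) (c : Cand) :
    supp edge (replaceRow w n r) c = supp edge w c + (r c - w n c) := by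
  rw [supp_eq_sum h, supp_eq_sum h', ← sub_eq_iff_eq_add', ← Finset.sum_sub_distrib,
    Finset.sum_eq_single n]
  · simp [replaceRow]
  · intro n' _ hne
    simp [replaceRow, hne]
  · simp

/-- A voter approving some member of `A` spends its whole strength on `A`. -/
lemma balanced_row_sum (hb : BalancedWeight edge s A w) {n : V} {c₀ : Cand} (hc₀ : c₀ ∈ A)
    (he : edge n c₀) : ∑ c ∈ A, w n c = s n := by
  obtain ⟨hf, hmax, -⟩ := hb
  have hle := sum_row_finset_le hf n A
  -- Drop the weight that `n` gives outside `A`, and give `c₀` everything left over.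
  set δ := s n - ∑ c ∈ A, w n c with hδ
  set r : Cand → ℝ := fun c => (if c ∈ A then w n c else 0) + (if c = c₀ then δ else 0) with hr
  have hf' : Feasible edge s (replaceRow w n r) := by
    refine feasible_replaceRow hf n r (fun c => ?_) (fun c hc => ?_) ?_
    · have := hf.1 n c
      simp only [hr]
      split_ifs <;> linarith
    · have hne : c ≠ c₀ := by rintro rfl; exact hc he
      simp [hr, hne, hf.2.1 n c hc]
    · simp [hr, Finset.sum_add_distrib, hδ]
  have h1 := hmax _ hf'
  have h2 : ∑ c ∈ A, (r c - w n c) = δ := by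
    rw [Finset.sum_congr rfl (g := fun c => if c = c₀ then δ else 0)]
    · simp [hc₀]
    · intro c hc
      simp [hr, hc]
  simp only [supp_replaceRow hf n r hf', Finset.sum_add_distrib, h2] at h1
  linarith

/-- A voter gives weight only to those members of `A` that have the smallest support among the
members of `A` it approves. -/
lemma balanced_supp_le (hb : BalancedWeight edge s A w) {n : V} {c₀ c₁ : Cand} (hc₀ : c₀ ∈ A)
    (he : edge n c₀) (hc₁ : c₁ ∈ A) (hw : 0 < w n c₁) : supp edge w c₁ ≤ supp edge w c₀ := by
  obtain ⟨hf, -, hmin⟩ := hb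
  by_contra! hlt
  have hne : c₀ ≠ c₁ := by rintro rfl; exact lt_irrefl _ hlt
  -- Shift `ε` from `c₁` to `c₀`; the bound by half the gap keeps the two supports ordered.
  obtain ⟨ε, hε, hε1, hε2⟩ : ∃ ε : ℝ, 0 < ε ∧ ε ≤ w n c₁ ∧
      ε ≤ (supp edge w c₁ - supp edge w c₀) / 2 :=
    ⟨min (w n c₁) ((supp edge w c₁ - supp edge w c₀) / 2), lt_min hw (by linarith),
      min_le_left _ _, min_le_right _ _⟩
  have he₁ : edge n c₁ := by
    by_contra h
    exact hw.ne' (hf.2.1 n c₁ h)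
  set e : Cand → ℝ := fun c => (if c = c₀ then ε else 0) - (if c = c₁ then ε else 0) with hedef
  set r : Cand → ℝ := fun c => w n c + e c with hr
  have hf' : Feasible edge s (replaceRow w n r) := by
    refine feasible_replaceRow hf n r (fun c => ?_) (fun c hc => ?_) ?_
    · have := hf.1 n c
      simp only [hr, hedef]
      by_cases h1 : c = c₁
      · subst h1
        simp only [if_true]
        split_ifs <;> linarith
      · simp only [if_neg h1]
        split_ifs <;> linarith
    · have hne0 : c ≠ c₀ := by rintro rfl; exact hc he
      have hne1 : c ≠ c₁ := by rintro rfl; exact hc he₁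
      simp [hr, hedef, hne0, hne1, hf.2.1 n c hc]
    · have : ∑ c, r c = ∑ c, w n c := by
        simp [hr, hedef, Finset.sum_add_distrib, Finset.sum_sub_distrib]
      rw [this]
      exact sum_row_le hf n
  have hsupp : ∀ c, supp edge (replaceRow w n r) c = supp edge w c + e c := by
    intro c
    rw [supp_replaceRow hf n r hf']
    simp [hr]
  have h1 := hmin _ hf' (by
    simp only [hsupp]
    simp [hedef, Finset.sum_add_distrib, Finset.sum_sub_distrib, hc₀, hc₁])
  have h2 : ∑ c ∈ A, (supp edge w c + e c) ^ 2 = ∑ c ∈ A, supp edge w c ^ 2 +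
      ((2 * supp edge w c₀ * ε + ε ^ 2) + (-2 * supp edge w c₁ * ε + ε ^ 2)) := by
    have h3 : ∀ c, (supp edge w c + e c) ^ 2 = supp edge w c ^ 2 +
        ((if c = c₀ then 2 * supp edge w c * ε + ε ^ 2 else 0) +
          (if c = c₁ then -2 * supp edge w c * ε + ε ^ 2 else 0)) := by
      intro c
      simp only [hedef]
      split_ifs with ha hb
      · exact absurd (ha.symm.trans hb) hne
      all_goals ring
    simp only [h3, Finset.sum_add_distrib, Finset.sum_ite_eq', hc₀, hc₁, if_true]
  simp only [hsupp, h2] at h1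
  nlinarith

/-- Double counting: the total support of `B`, arranged by voters. -/
lemma sum_supp_eq (hf : Feasible edge s w) (B : Finset Cand) :
    ∑ c ∈ B, supp edge w c = ∑ n ∈ B.sup (approvers edge), ∑ c ∈ B, w n c := by
  rw [Finset.sum_congr rfl fun c _ => supp_eq_sum hf c, Finset.sum_comm]
  refine (Finset.sum_subset (Finset.subset_univ _) fun n _ hn => ?_).symm
  refine Finset.sum_eq_zero fun c hc => hf.2.1 n c fun h => hn ?_
  exact Finset.mem_sup.2 ⟨c, hc, by simpa [approvers] using h⟩

end Rows

theorem balanced_min_support_eq_min_average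
    {V Cand : Type*} [Fintype V] [Fintype Cand] [DecidableEq V] [DecidableEq Cand]
    (edge : V → Cand → Prop) [∀ n c, Decidable (edge n c)]
    (s : V → ℝ) (hs : ∀ n, 0 ≤ s n)
    (A : Finset Cand) (hA : A.Nonempty) (w : V → Cand → ℝ)
    (hbal : BalancedWeight edge s A w) :
    A.inf' hA (supp edge w) =
      (A.powerset.filter fun B => B.Nonempty).inf'
        ⟨A, by simp [Finset.mem_filter, Finset.mem_powerset, hA]⟩
        (fun B => (∑ n ∈ B.sup (approvers edge), s n) / B.card) := by
  have hf := hbal.1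
  apply le_antisymm
  · refine Finset.le_inf' _ _ fun B hB => ?_
    obtain ⟨hBA, hBne⟩ := Finset.mem_filter.1 hB
    rw [Finset.mem_powerset] at hBA
    have hpos : (0 : ℝ) < B.card := by exact_mod_cast hBne.card_pos
    rw [le_div_iff₀ hpos, mul_comm, ← nsmul_eq_mul]
    calc B.card • A.inf' hA (supp edge w) ≤ ∑ c ∈ B, supp edge w c :=
          Finset.card_nsmul_le_sum _ _ _ fun c hc => Finset.inf'_le _ (hBA hc)
      _ = ∑ n ∈ B.sup (approvers edge), ∑ c ∈ B, w n c := sum_supp_eq hf B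
      _ ≤ ∑ n ∈ B.sup (approvers edge), s n :=
          Finset.sum_le_sum fun n _ => sum_row_finset_le hf n B
  · set m := A.inf' hA (supp edge w) with hm
    set B := A.filter fun c => supp edge w c = m with hBdef
    have hBA : B ⊆ A := Finset.filter_subset _ _
    have hBne : B.Nonempty := by
      obtain ⟨c, hc, h⟩ := Finset.exists_mem_eq_inf' hA (supp edge w)
      exact ⟨c, Finset.mem_filter.2 ⟨hc, h.symm⟩⟩
    have hpos : (0 : ℝ) < B.card := by exact_mod_cast hBne.card_pos
    refine (Finset.inf'_le _
      (Finset.mem_filter.2 ⟨Finset.mem_powerset.2 hBA, hBne⟩)).trans ?_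
    rw [div_le_iff₀ hpos]
    have hrow : ∀ n ∈ B.sup (approvers edge), ∑ c ∈ B, w n c = s n := by
      intro n hn
      obtain ⟨c₀, hc₀, hn₀⟩ := Finset.mem_sup.1 hn
      have he : edge n c₀ := by simpa [approvers] using hn₀
      have hmem := Finset.mem_filter.1 hc₀
      rw [← balanced_row_sum hbal hmem.1 he]
      refine Finset.sum_subset hBA fun c hc hcB => ?_
      -- Positive weight on `c` would force `supp c ≤ m`, putting `c` in `B`.
      by_contra hne
      have hle := balanced_supp_le hbal hmem.1 he hc (lt_of_le_of_ne (hf.1 n c) (Ne.symm hne))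
      rw [hmem.2] at hle
      exact hcB (Finset.mem_filter.2 ⟨hc, le_antisymm hle (Finset.inf'_le _ hc)⟩)
    have hsum : ∑ c ∈ B, supp edge w c = B.card • m :=
      Finset.sum_eq_card_nsmul fun c hc => (Finset.mem_filter.1 hc).2
    rw [← Finset.sum_congr rfl hrow, ← sum_supp_eq hf B, hsum, nsmul_eq_mul, mul_comm]
end

section
/- If weight vectors w,w'∈ℝ^E are nonnegative and feasible for the given instance, and f'∈ℝ^E is a sub-flow of f:=w'−w, then both w+f' and w'−f' are nonnegative and feasible. -/
/-!
A sub-flow value `x` of a flow value `y`, on an edge or at a vertex, lies between `0` and `y`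
(`subflow_value_mem_uIcc`). Hence `a + x` and `a + y - x` both lie between `a` and `a + y`. On an
edge, taking `a = w n c` and `a + y = w' n c`, both new weights inherit the lower bound `0`; at a
voter, taking for `a` and `a + y` her total weights under `w` and `w'`, both new totals inherit the
upper bound `s n`.
-/

open Finset

section SubFlow

variable {V Cand : Type*} [Fintype V] [Fintype Cand] [DecidableEq V] [DecidableEq Cand]

/-- The excess of a voter `n` relative to a flow `f` (positive sign toward candidates). -/
noncomputable def excessV (edge : V → Cand → Prop) [∀ n c, Decidable (edge n c)]
    (f : V → Cand → ℝ) (n : V) : ℝ :=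
  ∑ c ∈ approves edge n, f n c

/-- The excess of a candidate `c` relative to a flow `f`. -/
noncomputable def excessC (edge : V → Cand → Prop) [∀ n c, Decidable (edge n c)]
    (f : V → Cand → ℝ) (c : Cand) : ℝ :=
  - ∑ n ∈ approvers edge c, f n c

/-- `f'` is a sub-flow of `f`: it lives on the edges of the graph, on every edge where it is
nonzero it has the same sign as `f` and no larger absolute value, and the same holds for the
excess at every vertex. -/
def SubFlow (edge : V → Cand → Prop) [∀ n c, Decidable (edge n c)]
    (f' f : V → Cand → ℝ) : Prop :=
  (∀ n c, ¬ edge n c → f' n c = 0) ∧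
  (∀ n c, f' n c ≠ 0 → 0 < f' n c * f n c ∧ |f' n c| ≤ |f n c|) ∧
  (∀ n, excessV edge f' n ≠ 0 →
      0 < excessV edge f' n * excessV edge f n ∧ |excessV edge f' n| ≤ |excessV edge f n|) ∧
  (∀ c, excessC edge f' c ≠ 0 →
      0 < excessC edge f' c * excessC edge f c ∧ |excessC edge f' c| ≤ |excessC edge f c|)

/-- The sub-flow condition on a single signed value: `x` vanishes or has the sign of `y` and no
larger absolute value, so it lies between `0` and `y`. -/
theorem subflow_value_mem_uIcc {x y : ℝ} (h : x ≠ 0 → 0 < x * y ∧ |x| ≤ |y|) :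
    x ∈ Set.uIcc 0 y := by
  rw [Set.mem_uIcc]
  by_cases hx : x = 0
  · subst hx
    exact (le_total 0 y).imp (fun hy => ⟨le_rfl, hy⟩) (fun hy => ⟨hy, le_rfl⟩)
  · obtain ⟨hxy, habs⟩ := h hx
    rcases pos_and_pos_or_neg_and_neg_of_mul_pos hxy with ⟨h1, h2⟩ | ⟨h1, h2⟩
    · rw [abs_of_pos h1, abs_of_pos h2] at habs
      exact Or.inl ⟨h1.le, habs⟩
    · rw [abs_of_neg h1, abs_of_neg h2] at habs
      exact Or.inr ⟨by linarith, h1.le⟩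

theorem subflow_preserves_feasibility
    (edge : V → Cand → Prop) [∀ n c, Decidable (edge n c)]
    (s : V → ℝ) (hs : ∀ n, 0 ≤ s n)
    (w w' f' : V → Cand → ℝ)
    (hw : Feasible edge s w) (hw' : Feasible edge s w')
    (hf' : SubFlow edge f' (fun n c => w' n c - w n c)) :
    Feasible edge s (fun n c => w n c + f' n c) ∧
    Feasible edge s (fun n c => w' n c - f' n c) := by
  obtain ⟨hw0, hwE, hwS⟩ := hw
  obtain ⟨hw0', hwE', hwS'⟩ := hw'
  obtain ⟨hE, hedge, hvoter, -⟩ := hf'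
  have key : ∀ n c, f' n c ∈ Set.uIcc 0 (w' n c - w n c) :=
    fun n c => subflow_value_mem_uIcc (hedge n c)
  have keyV : ∀ n, ∑ c ∈ approves edge n, f' n c ∈
      Set.uIcc 0 (∑ c ∈ approves edge n, w' n c - ∑ c ∈ approves edge n, w n c) := by
    intro n
    have h := subflow_value_mem_uIcc (hvoter n)
    simpa only [excessV, Finset.sum_sub_distrib] using h
  refine ⟨⟨fun n c => ?_, fun n c h => ?_, fun n => ?_⟩,
    ⟨fun n c => ?_, fun n c h => ?_, fun n => ?_⟩⟩
  · have h1 := hw0 n c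
    have h2 := hw0' n c
    rcases Set.mem_uIcc.1 (key n c) with h | h <;> linarith
  · simp only [hwE n c h, hE n c h, add_zero]
  · have h1 := hwS n
    have h2 := hwS' n
    rw [Finset.sum_add_distrib]
    rcases Set.mem_uIcc.1 (keyV n) with h | h <;> linarith
  · have h1 := hw0 n c
    have h2 := hw0' n c
    rcases Set.mem_uIcc.1 (key n c) with h | h <;> linarith
  · simp only [hwE' n c h, hE n c h, sub_zero]
  · have h1 := hwS n
    have h2 := hwS' n
    rw [Finset.sum_sub_distrib]
    rcases Set.mem_uIcc.1 (keyV n) with h | h <;> linarith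

end SubFlow
end

section
/- Let G'=(V',E') be a cubic graph (every vertex has degree exactly 3) and k a positive integer. Consider the election instance with candidate set C=V', voter set N=E', where each voter n∈E' has vote strength s_n=1 and approves exactly the two endpoints of the edge n, and target committee size k. Then: (i) if G' has an independent set I of size k, then there is a feasible full solution (I,w) with supp_w(I)=3; and (ii) if G' has no independent set of size k, then every feasible full solution (A,w) satisfies supp_w(A) ≤ 5/2. -/
/-!
Each candidate has exactly three approving voters, namely the three edges at that vertex
(`card_approvers_elecEdge`). If `I` is independent, no edge has two endpoints in `I`, so every edge
can give its whole vote to its endpoint in `I`, and each member of `I` receives support `3`.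
Conversely, a committee of size `k` that is not independent contains the endpoints `a`, `b` of some
edge `e`. Besides `e`, each of `a` and `b` has only two further voters, so the two supports add up
to at most `2 + 2 + (w e a + w e b) ≤ 5`, and the smaller of them is at most `5 / 2`.
-/

open Finset

section Cubic

variable {V' : Type*} [Fintype V'] [DecidableEq V']

/-- The approval relation of the election instance built from a graph `G'`: each edge of
`G'` is a voter, approving exactly its two endpoints. -/
def elecEdge (G' : SimpleGraph V') : ↥G'.edgeSet → V' → Prop :=
  fun e c => c ∈ (e : Sym2 V')

instance (G' : SimpleGraph V') : ∀ (e : ↥G'.edgeSet) (c : V'), Decidable (elecEdge G' e c) :=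
  fun e c => by unfold elecEdge; infer_instance

lemma mem_approvers_elecEdge {G' : SimpleGraph V'} [DecidableRel G'.Adj] {c : V'}
    {e : ↥G'.edgeSet} : e ∈ approvers (elecEdge G') c ↔ c ∈ (e : Sym2 V') :=
  Finset.mem_filter.trans (and_iff_right (Finset.mem_univ e))

lemma mem_approves_elecEdge {G' : SimpleGraph V'} {c : V'}
    {e : ↥G'.edgeSet} : c ∈ approves (elecEdge G') e ↔ c ∈ (e : Sym2 V') :=
  Finset.mem_filter.trans (and_iff_right (Finset.mem_univ c))

lemma card_approvers_elecEdge (G' : SimpleGraph V') [DecidableRel G'.Adj] (c : V') :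
    (approvers (elecEdge G') c).card = G'.degree c := by
  rw [← SimpleGraph.card_incidenceFinset_eq_degree]
  refine Finset.card_bij (fun e _ => (e : Sym2 V')) ?_ ?_ ?_
  · intro e he
    rw [mem_approvers_elecEdge] at he
    rw [SimpleGraph.mem_incidenceFinset]
    exact ⟨e.2, he⟩
  · intro e _ f _ h
    exact Subtype.ext h
  · intro e he
    rw [SimpleGraph.mem_incidenceFinset] at he
    exact ⟨⟨e, he.1⟩, mem_approvers_elecEdge.mpr he.2, rfl⟩

/-- No voter can give a candidate more than her vote strength `1`, so if `c` has degree `3`, the two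
edges at `c` other than `e` contribute at most `2`. -/
lemma supp_le_two_add (G' : SimpleGraph V') [DecidableRel G'.Adj] {c : V'}
    (hc : G'.degree c = 3) {w : ↥G'.edgeSet → V' → ℝ}
    (hw : Feasible (elecEdge G') (fun _ => (1 : ℝ)) w) {e : ↥G'.edgeSet}
    (he : c ∈ (e : Sym2 V')) : supp (elecEdge G') w c ≤ 2 + w e c := by
  obtain ⟨h0, -, h1⟩ := hw
  have hmem : e ∈ approvers (elecEdge G') c := mem_approvers_elecEdge.mpr he
  have hcard : ((approvers (elecEdge G') c).erase e).card = 2 := by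
    rw [Finset.card_erase_of_mem hmem, card_approvers_elecEdge, hc]
  have hle : ∑ n ∈ (approvers (elecEdge G') c).erase e, w n c
      ≤ ((approvers (elecEdge G') c).erase e).card • (1 : ℝ) := by
    refine Finset.sum_le_card_nsmul _ _ _ fun n hn => ?_
    have hn' : c ∈ approves (elecEdge G') n := 
      mem_approves_elecEdge.mpr (mem_approvers_elecEdge.mp (Finset.mem_of_mem_erase hn))
    exact (Finset.single_le_sum (fun x _ => h0 n x) hn').trans (h1 n)
  rw [hcard] at hle
  unfold supp
  rw [← Finset.sum_erase_add _ _ hmem]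
  norm_num at hle
  linarith

theorem maximin_hardness_gap_instance
    (G' : SimpleGraph V') [DecidableRel G'.Adj]
    (hcubic : ∀ v : V', G'.degree v = 3)
    (k : ℕ) (hk : 0 < k) :
    (∀ (I : Finset V') (hI : I.card = k), (∀ a ∈ I, ∀ b ∈ I, ¬ G'.Adj a b) →
      ∃ w : ↥G'.edgeSet → V' → ℝ,
        Feasible (elecEdge G') (fun _ => (1 : ℝ)) w ∧
        I.inf' (Finset.card_pos.mp (by omega)) (supp (elecEdge G') w) = 3) ∧
    ((¬ ∃ I : Finset V', I.card = k ∧ ∀ a ∈ I, ∀ b ∈ I, ¬ G'.Adj a b) →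
      ∀ (A : Finset V') (hA : A.card = k) (w : ↥G'.edgeSet → V' → ℝ),
        Feasible (elecEdge G') (fun _ => (1 : ℝ)) w →
        A.inf' (Finset.card_pos.mp (by omega)) (supp (elecEdge G') w) ≤ 5 / 2) := by
  constructor
  · intro I hI hind
    refine ⟨fun e c => if c ∈ I ∧ elecEdge G' e c then 1 else 0, ⟨?_, ?_, ?_⟩, ?_⟩
    · intro n c
      dsimp only
      split_ifs <;> norm_num
    · intro n c h
      simp [h]
    · intro n
      rw [Finset.sum_boole]
      have hone : ((approves (elecEdge G') n).filter
          (fun c => c ∈ I ∧ elecEdge G' n c)).card ≤ 1 := by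
        rw [Finset.card_le_one]
        intro a ha b hb
        by_contra hab
        obtain ⟨-, haI, hae⟩ := Finset.mem_filter.mp ha
        obtain ⟨-, hbI, hbe⟩ := Finset.mem_filter.mp hb
        have hn : (n : Sym2 V') = s(a, b) := (Sym2.mem_and_mem_iff hab).mp ⟨hae, hbe⟩
        have hadj := n.2
        rw [hn, SimpleGraph.mem_edgeSet] at hadj
        exact hind a haI b hbI hadj
      exact Nat.cast_le_one.mpr hone
    · have hsupp : ∀ c ∈ I, supp (elecEdge G')
          (fun e c => if c ∈ I ∧ elecEdge G' e c then (1 : ℝ) else 0) c = 3 := by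
        intro c hc
        unfold supp
        rw [Finset.sum_congr rfl (g := fun _ => (1 : ℝ))]
        · simp [card_approvers_elecEdge, hcubic]
        · intro n hn
          exact if_pos ⟨hc, (Finset.mem_filter.mp hn).2⟩
      rw [Finset.inf'_congr _ rfl hsupp, Finset.inf'_const]
  · intro hno A hA w hw
    have hdep : ∃ a ∈ A, ∃ b ∈ A, G'.Adj a b := by
      by_contra! h
      exact hno ⟨A, hA, h⟩
    obtain ⟨a, ha, b, hb, hab⟩ := hdep
    let e : ↥G'.edgeSet := ⟨s(a, b), hab⟩
    have hae : a ∈ (e : Sym2 V') := Sym2.mem_mk_left a b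
    have hbe : b ∈ (e : Sym2 V') := Sym2.mem_mk_right a b
    have hsa := supp_le_two_add G' (hcubic a) hw hae
    have hsb := supp_le_two_add G' (hcubic b) hw hbe
    have hvote : w e a + w e b ≤ 1 := by
      rw [← Finset.sum_pair hab.ne]
      refine (Finset.sum_le_sum_of_subset_of_nonneg ?_ fun c _ _ => hw.1 e c).trans (hw.2.2 e)
      intro c hc
      simp only [Finset.mem_insert, Finset.mem_singleton] at hc
      rcases hc with rfl | rfl
      · exact mem_approves_elecEdge.mpr hae
      · exact mem_approves_elecEdge.mpr hbe
    have hma := Finset.inf'_le (supp (elecEdge G') w) ha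
    have hmb := Finset.inf'_le (supp (elecEdge G') w) hb
    linarith

end Cubic
end

section
/- Fix an integer k≥1 and ε with 0<ε<H_k, where H_k=∑_{i=1}^k 1/i. Consider the election instance with voters N={n_0,n_1,…,n_k}, candidates C={c_0,c_1,…,c_k}, target committee size k, where s_{n_j}=1 and C_{n_j}={c_i : 1≤i≤j} for each 1≤j≤k, and s_{n_0}=1/(H_k−ε) with C_{n_0}={c_0}. Then: (i) the committee {c_1,…,c_k} admits a feasible weight vector giving every member support exactly 1; and (ii) for every committee A containing c_0 and every feasible weight vector w, supp_w(A) ≤ 1/(H_k−ε). Consequently any full committee containing c_0 is at best a (H_k−ε)-factor approximation for maximin support. -/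
/-! Giving all of voter `n_j`'s strength to `c_j` for each `j ≥ 1` supports every member of
`{c_1, …, c_k}` by exactly `1`. The candidate `c_0` is approved by `n_0` alone, so its support, and
hence the minimum over any committee containing it, is at most `s_{n_0} = 1 / (H_k - ε)`. -/

open Finset

section Phragmen

/-- The `k`-th harmonicNum number. -/
noncomputable def harmonicNum (k : ℕ) : ℝ := ∑ i ∈ Finset.Icc 1 k, (1 : ℝ) / i

/-- The approval relation of the bad instance for `seqPhragmen`: voter `n_0` approves only
`c_0`, and voter `n_j` (for `j ≥ 1`) approves `c_i` exactly when `1 ≤ i ≤ j`. -/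
def chainEdge (k : ℕ) : Fin (k + 1) → Fin (k + 1) → Prop :=
  fun j i => (j.val = 0 ∧ i.val = 0) ∨ (1 ≤ i.val ∧ i.val ≤ j.val)

instance (k : ℕ) : ∀ j i, Decidable (chainEdge k j i) :=
  fun j i => by unfold chainEdge; infer_instance

/-- Vote strengths: `s_{n_0} = 1/(H_k - ε)` and `s_{n_j} = 1` for `j ≥ 1`. -/
noncomputable def chainStrength (k : ℕ) (ε : ℝ) : Fin (k + 1) → ℝ :=
  fun j => if j.val = 0 then 1 / (harmonicNum k - ε) else 1

theorem phragmen_negative_instance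
    (k : ℕ) (hk : 1 ≤ k) (ε : ℝ) (hε : 0 < ε) (hεH : ε < harmonicNum k) :
    (∃ w : Fin (k + 1) → Fin (k + 1) → ℝ,
      Feasible (chainEdge k) (chainStrength k ε) w ∧
      ∀ i : Fin (k + 1), 1 ≤ i.val → supp (chainEdge k) w i = 1) ∧
    (∀ (A : Finset (Fin (k + 1))) (w : Fin (k + 1) → Fin (k + 1) → ℝ),
      Feasible (chainEdge k) (chainStrength k ε) w →
      ∀ h0 : (0 : Fin (k + 1)) ∈ A,
        A.inf' ⟨0, h0⟩ (supp (chainEdge k) w) ≤ 1 / (harmonicNum k - ε)) := by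
  refine ⟨⟨fun j i => if j = i ∧ 1 ≤ i.val then 1 else 0, ⟨?_, ?_, ?_⟩, ?_⟩, ?_⟩
  · intro j i
    dsimp only
    split_ifs <;> norm_num
  · intro j i hji
    refine if_neg ?_
    rintro ⟨rfl, hi⟩
    exact hji (Or.inr ⟨hi, le_rfl⟩)
  · intro j
    have hH : 0 ≤ 1 / (harmonicNum k - ε) := one_div_nonneg.mpr (sub_nonneg.mpr hεH.le)
    by_cases hj : j.val = 0
    · rw [chainStrength, if_pos hj]
      refine (Finset.sum_eq_zero fun i _ => if_neg ?_).trans_le hH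
      rintro ⟨rfl, hi⟩
      omega
    · rw [chainStrength, if_neg hj]
      rw [Finset.sum_eq_single j (fun i _ hi => if_neg fun h => hi h.1.symm)
        (fun h => absurd (by simp [approves, chainEdge]; omega) h)]
      split_ifs <;> norm_num
  · intro i hi
    rw [supp, Finset.sum_eq_single i (fun j _ hj => if_neg fun h => hj h.1)
      (fun h => absurd (by simp [approvers, chainEdge]; omega) h)]
    exact if_pos ⟨rfl, hi⟩
  · rintro A w ⟨-, -, hw⟩ h0
    refine (Finset.inf'_le _ h0).trans ?_
    -- The edge `n_0 c_0` is an isolated component of the approval graph.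
    have h1 : approvers (chainEdge k) 0 = {0} := by
      ext j
      simp [approvers, chainEdge]
    have h2 : approves (chainEdge k) 0 = {0} := by
      ext i
      simp [approves, chainEdge]
    have h3 := hw 0
    rw [h2, Finset.sum_singleton] at h3
    rw [supp, h1, Finset.sum_singleton]
    simpa [chainStrength] using h3

end Phragmen
end

section
/- Let (A*,w*) be an optimal full solution to the maximin support instance, and let (A,w) be a feasible partial solution with |A|≤k and A≠A*. Then there exists a candidate c'∈A*∖A and a feasible solution (A+c',w') such that supp_{w'}(A+c') ≥ min{ supp_w(A), (1/2)·supp_{w*}(A*) }. -/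
/-!
The proof is a max-flow/min-cut argument. Write `D = Astar \ A` and let `t` be the real number
`min (supp_w(A)) (tstar / 2)`. Suppose that no feasible `v` giving support at least `t` to every
member of `A` gives support `t` to some member of `D`. By compactness, pick such a `v` maximizing
the total support of `D`, and let `R` be the set of candidates whose support can be partially
transferred to a member of `D` by a feasible modification of `v` (`Reach`).

Maximality of `v` forces `R ⊆ A ∪ Astar`, support exactly `t` on `R ∩ A`, and no unused strength
for the voters approving someone in `R`; moreover these voters give weight to `R` only
(`reach_step`). So `v` spends on `R` all the strength available to `R`, at least what `wstar`
spends there, that is, at least `tstar * |R ∩ Astar|`. But `R ∩ Astar` consists of `D` and of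
`R ∩ A ∩ Astar`, and `v` gives `R` strictly less than `t * (|R ∩ A| + |D|)`. Since
`|A \ Astar| ≤ |D|` and `2 * t ≤ tstar`, this is impossible.

Augmenting paths are never handled explicitly: feasible vectors form a convex set, so two
transfers are composed by taking a convex combination of the two modified vectors.
-/

open Finset

section Augment

set_option linter.unusedSectionVars false

variable {V Cand : Type*} [Fintype V] [Fintype Cand] [DecidableEq V] [DecidableEq Cand]
  {edge : V → Cand → Prop} [∀ n c, Decidable (edge n c)] {s : V → ℝ}

/-! ### Feasible vectors and their convex combinations -/

/-- The weight off the edges is zero, so the sums may range over all voters and candidates. -/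
lemma feasible_iff_full (v : V → Cand → ℝ) : Feasible edge s v ↔
    (∀ n c, 0 ≤ v n c) ∧ (∀ n c, ¬ edge n c → v n c = 0) ∧ ∀ n, ∑ c, v n c ≤ s n := by
  unfold Feasible
  refine and_congr_right fun _ => and_congr_right fun h0 => forall_congr' fun n => ?_
  have : ∑ c ∈ approves edge n, v n c = ∑ c, v n c := by
    apply Finset.sum_subset (Finset.subset_univ _)
    intro c _ hc
    exact h0 n c (by simpa [approves] using hc)
  rw [this]

lemma supp_eq_full {v : V → Cand → ℝ} (hv : Feasible edge s v) (c : Cand) :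
    supp edge v c = ∑ n, v n c := by
  apply Finset.sum_subset (Finset.subset_univ _)
  intro n _ hn
  exact hv.2.1 n c (by simpa [approvers] using hn)

lemma supp_nonneg {v : V → Cand → ℝ} (hv : Feasible edge s v) (c : Cand) :
    0 ≤ supp edge v c :=
  Finset.sum_nonneg fun n _ => hv.1 n c

lemma feasible_combo {v₁ v₂ : V → Cand → ℝ} (h₁ : Feasible edge s v₁) (h₂ : Feasible edge s v₂)
    {a b : ℝ} (ha : 0 ≤ a) (hb : 0 ≤ b) (hab : a + b = 1) :
    Feasible edge s (fun n c => a * v₁ n c + b * v₂ n c) := by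
  refine ⟨fun n c => ?_, fun n c h => ?_, fun n => ?_⟩
  · have := h₁.1 n c
    have := h₂.1 n c
    positivity
  · simp [h₁.2.1 n c h, h₂.2.1 n c h]
  · rw [Finset.sum_add_distrib, ← Finset.mul_sum, ← Finset.mul_sum]
    have e : s n = a * s n + b * s n := by rw [← add_mul, hab, one_mul]
    rw [e]
    exact add_le_add (mul_le_mul_of_nonneg_left (h₁.2.2 n) ha)
      (mul_le_mul_of_nonneg_left (h₂.2.2 n) hb)

lemma supp_combo (v₁ v₂ : V → Cand → ℝ) (a b : ℝ) (c : Cand) :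
    supp edge (fun n c => a * v₁ n c + b * v₂ n c) c = a * supp edge v₁ c + b * supp edge v₂ c := by
  simp only [supp, Finset.sum_add_distrib, Finset.mul_sum]

/-! ### Transfers of support -/

/-- Starting from `v`, a positive amount `ε` of support can be moved from `c` to a member of `D`,
all other supports being unchanged. For `c ∈ D` this holds trivially, by moving `c` to itself. -/
def Reach (edge : V → Cand → Prop) [∀ n c, Decidable (edge n c)] (s : V → ℝ) (v : V → Cand → ℝ)
    (D : Finset Cand) (c : Cand) : Prop :=
  ∃ c₀ ∈ D, ∃ ε > 0, ∃ v', Feasible edge s v' ∧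
    ∀ x, supp edge v' x = supp edge v x + ε * ((if x = c₀ then 1 else 0) - if x = c then 1 else 0)

lemma exists_shift {v : V → Cand → ℝ} (hv : Feasible edge s v) {n : V} {c d : Cand}
    (hc : edge n c) (hd : 0 < v n d) (hne : c ≠ d) :
    ∃ v₁, Feasible edge s v₁ ∧ ∀ x, supp edge v₁ x =
      supp edge v x + v n d * ((if x = c then 1 else 0) - if x = d then 1 else 0) := by
  have hv' := (feasible_iff_full v).1 hv
  have hed : edge n d := by
    by_contra h
    exact hd.ne' (hv.2.1 n d h)
  have hf : Feasible edge s (fun m x => v m x + if m = n then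
      v n d * ((if x = c then 1 else 0) - if x = d then 1 else 0) else 0) := by
    rw [feasible_iff_full]
    refine ⟨fun m x => ?_, fun m x h => ?_, fun m => ?_⟩
    · have := hv.1 m x
      by_cases hm : m = n
      · subst hm
        by_cases hx : x = d
        · subst hx
          simp [hne.symm]
        · by_cases hxc : x = c
          · subst hxc
            simp only [hx, if_true, if_false]
            linarith
          · simpa [hx, hxc] using this
      · simpa [hm] using this
    · by_cases hm : m = n
      · subst hm
        have h1 : x ≠ c := by rintro rfl; exact h hc
        have h2 : x ≠ d := by rintro rfl; exact h hed
        simp [h1, h2, hv.2.1 m x h]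
      · simp [hm, hv.2.1 m x h]
    · rw [Finset.sum_add_distrib]
      by_cases hm : m = n
      · simp [hm, ← Finset.mul_sum, hv'.2.2 n]
      · simp [hm, hv'.2.2 m]
  refine ⟨_, hf, fun x => ?_⟩
  rw [supp_eq_full hf, supp_eq_full hv, Finset.sum_add_distrib]
  simp

lemma exists_add {v : V → Cand → ℝ} (hv : Feasible edge s v) {n : V} {c : Cand}
    (hc : edge n c) (hs : ∑ x, v n x < s n) :
    ∃ δ > 0, ∃ v₁, Feasible edge s v₁ ∧ ∀ x, supp edge v₁ x =
      supp edge v x + δ * if x = c then 1 else 0 := by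
  have hv' := (feasible_iff_full v).1 hv
  set δ := s n - ∑ x, v n x with hδ
  have hpos : 0 < δ := by linarith
  have hf : Feasible edge s (fun m x => v m x + if m = n then
      δ * (if x = c then 1 else 0) else 0) := by
    rw [feasible_iff_full]
    refine ⟨fun m x => ?_, fun m x h => ?_, fun m => ?_⟩
    · have := hv.1 m x
      positivity
    · by_cases hm : m = n
      · subst hm
        have h1 : x ≠ c := by rintro rfl; exact h hc
        simp [h1, hv.2.1 m x h]
      · simp [hm, hv.2.1 m x h]
    · rw [Finset.sum_add_distrib]
      by_cases hm : m = n
      · subst hm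
        simp [hδ]
      · simp [hm, hv'.2.2 m]
  refine ⟨δ, hpos, _, hf, fun x => ?_⟩
  rw [supp_eq_full hf, supp_eq_full hv, Finset.sum_add_distrib]
  simp

/-- A voter approving a reachable `c` can move some of her weight from `d` to `c`, so `d` is
reachable too. -/
lemma reach_step {v : V → Cand → ℝ} (hv : Feasible edge s v) {D : Finset Cand} {n : V}
    {c d : Cand} (hr : Reach edge s v D c) (hc : edge n c) (hd : 0 < v n d) :
    Reach edge s v D d := by
  by_cases hne : c = d
  · exact hne ▸ hr
  obtain ⟨c₀, hc₀, ε, hε, v', hf', hs'⟩ := hr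
  obtain ⟨v₁, hf₁, hs₁⟩ := exists_shift hv hc hd hne
  have hp : 0 < ε + v n d := by linarith
  -- These coefficients make the gain and the loss of `c` cancel.
  refine ⟨c₀, hc₀, ε * v n d / (ε + v n d), by positivity, _,
    feasible_combo hf' hf₁ (a := v n d / (ε + v n d)) (b := ε / (ε + v n d))
      (by positivity) (by positivity) (by field_simp; ring), fun x => ?_⟩
  rw [supp_combo, hs', hs₁]
  field_simp
  ring

/-- If a voter approving a reachable candidate has unused strength, then the support of some
member of `D` can be increased without changing any other support. -/
lemma reach_slack {v : V → Cand → ℝ} (hv : Feasible edge s v) {D : Finset Cand} {n : V}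
    {c : Cand} (hr : Reach edge s v D c) (hc : edge n c) (hs : ∑ x, v n x < s n) :
    ∃ c₀ ∈ D, ∃ ε > 0, ∃ v', Feasible edge s v' ∧
      ∀ x, supp edge v' x = supp edge v x + ε * if x = c₀ then 1 else 0 := by
  obtain ⟨c₀, hc₀, ε, hε, v', hf', hs'⟩ := hr
  obtain ⟨δ, hδ, v₁, hf₁, hs₁⟩ := exists_add hv hc hs
  have hp : 0 < ε + δ := by linarith
  refine ⟨c₀, hc₀, ε * δ / (ε + δ), by positivity, _,
    feasible_combo hf' hf₁ (a := δ / (ε + δ)) (b := ε / (ε + δ))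
      (by positivity) (by positivity) (by field_simp; ring), fun x => ?_⟩
  rw [supp_combo, hs', hs₁]
  field_simp
  ring

/-! ### The cut argument -/

/-- The feasible vectors with support at least `t` on `A` form a compact set. -/
lemma exists_maximizer (A D : Finset Cand) (t : ℝ) {w : V → Cand → ℝ} (hw : Feasible edge s w)
    (hwt : ∀ c ∈ A, t ≤ supp edge w c) :
    ∃ v, Feasible edge s v ∧ (∀ c ∈ A, t ≤ supp edge v c) ∧
      ∀ v', Feasible edge s v' → (∀ c ∈ A, t ≤ supp edge v' c) →
        ∑ c ∈ D, supp edge v' c ≤ ∑ c ∈ D, supp edge v c := by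
  have hcont : ∀ c, Continuous fun v : V → Cand → ℝ => supp edge v c := fun c => by
    unfold supp
    fun_prop
  let K : Set (V → Cand → ℝ) := {v | Feasible edge s v ∧ ∀ c ∈ A, t ≤ supp edge v c}
  have hclosed : IsClosed K := by
    have : K = (⋂ n, ⋂ c, {v | 0 ≤ v n c}) ∩ (⋂ n, ⋂ c, ⋂ (_ : ¬ edge n c), {v | v n c = 0}) ∩
        (⋂ n, {v | ∑ c ∈ approves edge n, v n c ≤ s n}) ∩
        ⋂ c ∈ A, {v | t ≤ supp edge v c} := by
      ext v
      simp [K, Feasible, and_assoc]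
    rw [this]
    refine ((IsClosed.inter ?_ ?_).inter ?_).inter ?_
    · exact isClosed_iInter fun n => isClosed_iInter fun c =>
        isClosed_le continuous_const (by fun_prop)
    · exact isClosed_iInter fun n => isClosed_iInter fun c => isClosed_iInter fun _ =>
        isClosed_eq (by fun_prop) continuous_const
    · exact isClosed_iInter fun n => isClosed_le (by fun_prop) continuous_const
    · exact isClosed_biInter fun c _ => isClosed_le continuous_const (hcont c)
  have hsub : K ⊆ Set.Icc (fun _ _ => 0) (fun n _ => s n) := by
    rintro v ⟨hv, -⟩
    refine ⟨fun n c => hv.1 n c, fun n c => ?_⟩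
    exact (Finset.single_le_sum (fun x _ => hv.1 n x) (Finset.mem_univ c)).trans
      (((feasible_iff_full v).1 hv).2.2 n)
  have hK : IsCompact K := isCompact_Icc.of_isClosed_subset hclosed hsub
  obtain ⟨v, hvK, hmax⟩ := hK.exists_isMaxOn ⟨w, hw, hwt⟩
    (f := fun v => ∑ c ∈ D, supp edge v c)
    (continuous_finsetSum D fun c _ => hcont c).continuousOn
  exact ⟨v, hvK.1, hvK.2, fun v' h1 h2 => hmax ⟨h1, h2⟩⟩

/-- The real-valued form of the theorem, with a common threshold `t`. -/
lemma exists_augment_real {A B : Finset Cand} (hcard : A.card ≤ B.card) (hne : A ≠ B)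
    {w u : V → Cand → ℝ} (hw : Feasible edge s w) (hu : Feasible edge s u) {t T : ℝ}
    (htT : 2 * t ≤ T) (hwt : ∀ c ∈ A, t ≤ supp edge w c) (huT : ∀ c ∈ B, T ≤ supp edge u c) :
    ∃ c' ∈ B \ A, ∃ v, Feasible edge s v ∧ t ≤ supp edge v c' ∧ ∀ c ∈ A, t ≤ supp edge v c := by
  classical
  by_contra! hcon
  have hD : (B \ A).Nonempty := by
    rw [Finset.sdiff_nonempty]
    exact fun h => hne (Finset.eq_of_subset_of_card_le h hcard).symm
  set D := B \ A with hDdef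
  have hlt : ∀ v, Feasible edge s v → (∀ c ∈ A, t ≤ supp edge v c) → ∀ c ∈ D,
      supp edge v c < t := by
    intro v hv hvt c hc
    by_contra! h
    obtain ⟨x, hx, hx'⟩ := hcon c hc v hv h
    exact absurd (hvt x hx) (not_le.2 hx')
  have ht : 0 < t := by
    obtain ⟨c, hc⟩ := hD
    exact (supp_nonneg hw c).trans_lt (hlt w hw hwt c hc)
  obtain ⟨v, hv, hvt, hmax⟩ := exists_maximizer A D t hw hwt
  have hvf := (feasible_iff_full v).1 hv
  have huf := (feasible_iff_full u).1 hu
  let R : Finset Cand := Finset.univ.filter (Reach edge s v D)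
  have hmemR : ∀ c, c ∈ R ↔ Reach edge s v D c := fun c => by simp [R]
  have hDR : D ⊆ R := fun c hc => (hmemR c).2 ⟨c, hc, 1, one_pos, v, hv, by simp⟩
  have hDA : ∀ c ∈ D, c ∉ A := fun c hc => (Finset.mem_sdiff.1 hc).2
  -- A reachable candidate outside `D` has no support to spare.
  have htight : ∀ c ∈ R, c ∉ D → c ∈ A ∧ supp edge v c = t := by
    intro c hc hcD
    by_contra hnot
    have hspare : c ∈ A → t < supp edge v c := fun hcA =>
      lt_of_le_of_ne (hvt c hcA) fun h => hnot ⟨hcA, h.symm⟩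
    obtain ⟨c₀, hc₀, ε, hε, v', hf', hs'⟩ := (hmemR c).1 hc
    -- Truncating the transfer keeps the support of `c` above `t` when `c ∈ A`.
    obtain ⟨a, ha0, ha1, hat⟩ : ∃ a : ℝ, 0 < a ∧ a ≤ 1 ∧ (c ∈ A → t ≤ supp edge v c - a * ε) := by
      by_cases hcA : c ∈ A
      · have hgap : 0 < supp edge v c - t := by linarith [hspare hcA]
        refine ⟨min 1 ((supp edge v c - t) / ε), by positivity, min_le_left _ _, fun _ => ?_⟩
        have := mul_le_mul_of_nonneg_right (min_le_right 1 ((supp edge v c - t) / ε)) hε.le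
        rw [div_mul_cancel₀ _ hε.ne'] at this
        linarith
      · exact ⟨1, one_pos, le_rfl, fun h => absurd h hcA⟩
    have hle := hmax _ (feasible_combo hf' hv (a := a) (b := 1 - a) ha0.le (by linarith) (by ring))
      (by
        intro x hx
        rw [supp_combo, hs']
        have hx0 : x ≠ c₀ := by rintro rfl; exact hDA _ hc₀ hx
        have := hvt x hx
        by_cases hxc : x = c
        · subst hxc
          simp only [hx0, if_true, if_false]
          linarith [hat hx]
        · simp only [hx0, hxc, if_false]
          linarith)
    have hsum : ∑ x ∈ D, supp edge (fun n c => a * v' n c + (1 - a) * v n c) x =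
        ∑ x ∈ D, (supp edge v x + a * ε * if x = c₀ then 1 else 0) := by
      refine Finset.sum_congr rfl fun x hx => ?_
      rw [supp_combo, hs']
      have hxc : x ≠ c := by rintro rfl; exact hcD hx
      simp only [hxc, if_false]
      ring
    rw [hsum, Finset.sum_add_distrib, ← Finset.mul_sum, Finset.sum_ite_eq', if_pos hc₀] at hle
    have : 0 < a * ε := by positivity
    linarith
  have hfull : ∀ n, ∀ c ∈ R, edge n c → ∑ x, v n x = s n := by
    intro n c hc hnc
    refine le_antisymm (hvf.2.2 n) (not_lt.1 fun hlt' => ?_)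
    obtain ⟨c₀, hc₀, ε, hε, v', hf', hs'⟩ := reach_slack hv ((hmemR c).1 hc) hnc hlt'
    have hle := hmax v' hf' (by
      intro x hx
      rw [hs']
      have := hvt x hx
      split_ifs <;> linarith)
    rw [Finset.sum_congr rfl fun x _ => hs' x, Finset.sum_add_distrib, ← Finset.mul_sum,
      Finset.sum_ite_eq', if_pos hc₀] at hle
    linarith
  have hvoter : ∀ n, ∑ c ∈ R, u n c ≤ ∑ c ∈ R, v n c := by
    intro n
    by_cases hn : ∃ c ∈ R, edge n c
    · obtain ⟨c, hc, hnc⟩ := hn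
      have h1 : ∑ x ∈ R, v n x = ∑ x, v n x := by
        apply Finset.sum_subset (Finset.subset_univ _)
        intro x _ hx
        by_contra h0
        exact hx ((hmemR x).2 (reach_step hv ((hmemR c).1 hc) hnc
          (lt_of_le_of_ne (hv.1 n x) (Ne.symm h0))))
      rw [h1, hfull n c hc hnc]
      exact (Finset.sum_le_sum_of_subset_of_nonneg (Finset.subset_univ R)
        fun x _ _ => hu.1 n x).trans (huf.2.2 n)
    · push Not at hn
      rw [Finset.sum_eq_zero fun c hc => hu.2.1 n c (hn c hc)]
      exact Finset.sum_nonneg fun c _ => hv.1 n c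
  have hcut : ∑ c ∈ R, supp edge u c ≤ ∑ c ∈ R, supp edge v c := by
    rw [Finset.sum_congr rfl fun c _ => supp_eq_full hu c,
      Finset.sum_congr rfl fun c _ => supp_eq_full hv c, Finset.sum_comm,
      Finset.sum_comm (s := R)]
    exact Finset.sum_le_sum fun n _ => hvoter n
  rw [← Finset.sum_sdiff hDR, ← Finset.sum_sdiff hDR] at hcut
  have hv1 : ∑ c ∈ R \ D, supp edge v c = (R \ D).card * t := by
    rw [Finset.sum_congr rfl fun c hc => (htight c (Finset.mem_sdiff.1 hc).1
      (Finset.mem_sdiff.1 hc).2).2]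
    simp
  have hv2 : ∑ c ∈ D, supp edge v c < D.card * t := by
    rw [← nsmul_eq_mul, ← Finset.sum_const]
    exact Finset.sum_lt_sum_of_nonempty hD fun c hc => hlt v hv hvt c hc
  have hu2 : D.card * T ≤ ∑ c ∈ D, supp edge u c := by
    rw [← nsmul_eq_mul]
    exact Finset.card_nsmul_le_sum _ _ _ fun c hc => huT c (Finset.mem_sdiff.1 hc).1
  have hu1 : ((R \ D) ∩ B).card * T ≤ ∑ c ∈ R \ D, supp edge u c := by
    rw [← nsmul_eq_mul]
    exact (Finset.card_nsmul_le_sum _ _ _ fun c hc => huT c (Finset.mem_inter.1 hc).2).trans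
      (Finset.sum_le_sum_of_subset_of_nonneg Finset.inter_subset_left
        fun c _ _ => supp_nonneg hu c)
  have hcardRD : (R \ D).card ≤ ((R \ D) ∩ B).card + D.card := by
    rw [← Finset.card_inter_add_card_sdiff (R \ D) B]
    have hsub : (R \ D) \ B ⊆ A \ B := fun c hc => by
      obtain ⟨h1, h2⟩ := Finset.mem_sdiff.1 hc
      obtain ⟨h3, h4⟩ := Finset.mem_sdiff.1 h1
      exact Finset.mem_sdiff.2 ⟨(htight c h3 h4).1, h2⟩
    have h1 := Finset.card_le_card hsub
    have h2 : (A \ B).card ≤ D.card := Finset.card_sdiff_le_card_sdiff_iff.2 hcard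
    omega
  have hcardR : ((R \ D).card : ℝ) ≤ ((R \ D) ∩ B).card + D.card := by exact_mod_cast hcardRD
  have e1 := mul_le_mul_of_nonneg_right hcardR ht.le
  have e2 := mul_le_mul_of_nonneg_left htT (Nat.cast_nonneg (α := ℝ) D.card)
  have e3 := mul_le_mul_of_nonneg_left (show t ≤ T by linarith)
    (Nat.cast_nonneg (α := ℝ) ((R \ D) ∩ B).card)
  linarith

end Augment

/-! ### Passage to extended real thresholds -/

theorem exists_augmenting_candidate
    {V Cand : Type*} [Fintype V] [Fintype Cand] [DecidableEq V] [DecidableEq Cand]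
    (edge : V → Cand → Prop) [∀ n c, Decidable (edge n c)]
    (s : V → ℝ) (hs : ∀ n, 0 ≤ s n) (k : ℕ) (hk : 0 < k)
    (Astar : Finset Cand) (wstar : V → Cand → ℝ) (tstar : ℝ)
    (hwstar : Feasible edge s wstar) (hAstar : Astar.card = k)
    (htstar : suppMin edge wstar Astar = (tstar : EReal))
    (hopt : ∀ (B : Finset Cand) (v : V → Cand → ℝ), Feasible edge s v → B.card = k →
      suppMin edge v B ≤ suppMin edge wstar Astar)
    (A : Finset Cand) (w : V → Cand → ℝ) (hw : Feasible edge s w)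
    (hAk : A.card ≤ k) (hne : A ≠ Astar) :
    ∃ c' ∈ Astar \ A, ∃ w' : V → Cand → ℝ, Feasible edge s w' ∧
      min (suppMin edge w A) ((tstar / 2 : ℝ) : EReal) ≤
        suppMin edge w' (insert c' A) := by
  have hu : ∀ c ∈ Astar, tstar ≤ supp edge wstar c := fun c hc => by
    rw [← EReal.coe_le_coe_iff, ← htstar]
    exact Finset.inf_le hc
  obtain ⟨t, ht⟩ : ∃ t : ℝ, min (suppMin edge w A) ((tstar / 2 : ℝ) : EReal) = t := by
    rcases A.eq_empty_or_nonempty with rfl | hA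
    · exact ⟨tstar / 2, by simp [suppMin]⟩
    · obtain ⟨c, -, hc⟩ := A.exists_mem_eq_inf hA (fun c => (supp edge w c : EReal))
      rcases min_choice (suppMin edge w A) ((tstar / 2 : ℝ) : EReal) with h | h
      · exact ⟨supp edge w c, h.trans hc⟩
      · exact ⟨_, h⟩
  have ht1 : ∀ c ∈ A, t ≤ supp edge w c := fun c hc => by
    rw [← EReal.coe_le_coe_iff, ← ht]
    exact (min_le_left _ _).trans (Finset.inf_le hc)
  have ht2 : t ≤ tstar / 2 := by
    rw [← EReal.coe_le_coe_iff, ← ht]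
    exact min_le_right _ _
  obtain ⟨c', hc', v, hv, h1, h2⟩ := exists_augment_real (hAstar ▸ hAk) hne hw hwstar
    (show 2 * t ≤ tstar by linarith) ht1 hu
  refine ⟨c', hc', v, hv, ?_⟩
  rw [ht]
  refine Finset.le_inf fun c hc => EReal.coe_le_coe_iff.2 ?_
  rcases Finset.mem_insert.1 hc with rfl | hc
  · exact h1
  · exact h2 c hc
end
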